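/- Suppose a and b are linked by I over M and every associated prime of M/IM is minimal in Ass(M/IM). Then Ass(M/IM) = Ass(M/aM) ∪ Ass(M/bM) and Ass(M/aM) = Ass(M/IM) ∩ V(a). -/

import Mathlib

open RingTheory.Sequence

/-- The colon submodule `N :_M a = {m ∈ M | a m ⊆ N}`. -/
def Submodule.colonBy {R M : Type*} [CommRing R] [AddCommGroup M] [Module R M]
    (N : Submodule R M) (a : Ideal R) : Submodule R M :=
  ⨅ r ∈ a, N.comap (LinearMap.lsmul R M r)
/-- `a` and `b` are linked by `I` over `M`: `I ⊆ a ∩ b` is generated by an `M`-regular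
sequence, `aM ≠ M ≠ bM`, `IM :_M a = bM` and `IM :_M b = aM`. -/
def Ideal.LinkedBy (R M : Type*) [CommRing R] [AddCommGroup M] [Module R M]
    (a b I : Ideal R) : Prop :=
  I ≤ a ⊓ b ∧
  (∃ rs : List R, I = Ideal.ofList rs ∧ RingTheory.Sequence.IsRegular M rs) ∧
  a • (⊤ : Submodule R M) ≠ ⊤ ∧ b • (⊤ : Submodule R M) ≠ ⊤ ∧
  (I • ⊤ : Submodule R M).colonBy a = b • (⊤ : Submodule R M) ∧
  (I • ⊤ : Submodule R M).colonBy b = a • (⊤ : Submodule R M)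

theorem Submodule.mem_colonBy {R M : Type*} [CommRing R] [AddCommGroup M] [Module R M]
    {N : Submodule R M} {a : Ideal R} {x : M} : x ∈ N.colonBy a ↔ ∀ r ∈ a, r • x ∈ N := by
  simp [Submodule.colonBy, Submodule.mem_iInf]

theorem mem_associatedPrimes_quotient_iff {R M : Type*} [CommRing R] [IsNoetherianRing R]
    [AddCommGroup M] [Module R M] {N : Submodule R M} {p : Ideal R} :
    p ∈ associatedPrimes R (M ⧸ N) ↔ p.IsPrime ∧ ∃ x : M, ∀ r, r ∈ p ↔ r • x ∈ N := by
  rw [AssociatedPrimes.mem_iff, isAssociatedPrime_iff, N.mkQ_surjective.exists]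
  simp only [SetLike.ext_iff, Submodule.mem_colon_singleton, Submodule.mem_bot,
    Submodule.mkQ_apply, ← Submodule.Quotient.mk_smul, Submodule.Quotient.mk_eq_zero]

/-- The associated primes of `M / (N :_M a)`, which embeds into a finite power of `M / N`,
are associated primes of `M / N`. -/
theorem associatedPrimes_quotient_colonBy_subset {R M : Type*} [CommRing R] [IsNoetherianRing R]
    [AddCommGroup M] [Module R M] (N : Submodule R M) (a : Ideal R) :
    associatedPrimes R (M ⧸ N.colonBy a) ⊆ associatedPrimes R (M ⧸ N) := by
  intro p hass
  obtain ⟨hp, x, hx⟩ := mem_associatedPrimes_quotient_iff.1 hass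
  obtain ⟨s, rfl⟩ := IsNoetherian.noetherian a
  have hle : s.inf (fun r ↦ N.colon {r • x}) ≤ p := by
    intro t ht
    rw [hx, Submodule.mem_colonBy]
    intro r hr
    induction hr using Submodule.span_induction with
    | mem r hr =>
      rw [smul_comm]
      exact Submodule.mem_colon_singleton.1 (Finset.inf_le (f := fun r ↦ N.colon {r • x}) hr ht)
    | zero => simp
    | add r r' _ _ h h' => rw [add_smul]; exact N.add_mem h h'
    | smul c r _ h => rw [smul_assoc]; exact N.smul_mem c h
  obtain ⟨r, hr, hrp⟩ := hp.inf_le'.1 hle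
  refine mem_associatedPrimes_quotient_iff.2 ⟨hp, r • x, fun t ↦ ⟨fun ht ↦ ?_, fun ht ↦ ?_⟩⟩
  · rw [smul_comm]
    exact Submodule.mem_colonBy.1 ((hx t).1 ht) r (Submodule.subset_span hr)
  · exact hrp (Submodule.mem_colon_singleton.2 ht)

theorem exists_associatedPrimes_quotient_smul_top_le {R M : Type*} [CommRing R]
    [IsNoetherianRing R] [AddCommGroup M] [Module R M] [Module.Finite R M] {a p : Ideal R}
    [hp : p.IsPrime] (hann : Module.annihilator R M ≤ p) (ha : a ≤ p) :
    ∃ q ∈ associatedPrimes R (M ⧸ (a • ⊤ : Submodule R M)), q ≤ p := by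
  have hsupp : (⟨p, hp⟩ : PrimeSpectrum R) ∈
      Module.support R (M ⧸ (a • ⊤ : Submodule R M)) := by
    rw [Module.support_quotient]
    exact ⟨Module.mem_support_iff_of_finite.2 hann, ha⟩
  obtain ⟨q, hq, hqp⟩ := Ideal.exists_minimalPrimes_le (Module.mem_support_iff_of_finite.1 hsupp)
  exact ⟨q, Module.associatedPrimes.minimalPrimes_annihilator_subset_associatedPrimes R _ hq, hqp⟩

theorem Ideal.LinkedBy.symm {R M : Type*} [CommRing R] [AddCommGroup M] [Module R M]
    {a b I : Ideal R} (h : Ideal.LinkedBy R M a b I) : Ideal.LinkedBy R M b a I :=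
  ⟨inf_comm a b ▸ h.1, h.2.1, h.2.2.2.1, h.2.2.1, h.2.2.2.2.2, h.2.2.2.2.1⟩

theorem associatedPrimes_eq_inter_of_linkedBy {R M : Type*} [CommRing R] [IsNoetherianRing R]
    [AddCommGroup M] [Module R M] [Module.Finite R M]
    {a b I : Ideal R} (h : Ideal.LinkedBy R M a b I)
    (hmin : ∀ p ∈ associatedPrimes R (M ⧸ (I • ⊤ : Submodule R M)),
      ∀ q ∈ associatedPrimes R (M ⧸ (I • ⊤ : Submodule R M)), q ≤ p → q = p) :
    associatedPrimes R (M ⧸ (a • ⊤ : Submodule R M)) =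
      associatedPrimes R (M ⧸ (I • ⊤ : Submodule R M)) ∩ {p : Ideal R | a ≤ p} := by
  have hsub : associatedPrimes R (M ⧸ (a • ⊤ : Submodule R M)) ⊆
      associatedPrimes R (M ⧸ (I • ⊤ : Submodule R M)) := by
    rw [← h.2.2.2.2.2]
    exact associatedPrimes_quotient_colonBy_subset _ _
  refine Set.Subset.antisymm (fun p hp ↦ ⟨hsub hp, fun r hr ↦ ?_⟩) ?_
  · obtain ⟨-, x, hx⟩ := mem_associatedPrimes_quotient_iff.1 hp
    exact (hx r).2 (Submodule.smul_mem_smul hr trivial)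
  · rintro p ⟨hp, hap⟩
    obtain ⟨hprime, x, hx⟩ := mem_associatedPrimes_quotient_iff.1 hp
    have hann : Module.annihilator R M ≤ p := fun r hr ↦ by
      rw [hx, Module.mem_annihilator.1 hr x]
      exact Submodule.zero_mem _
    obtain ⟨q, hq, hqp⟩ := exists_associatedPrimes_quotient_smul_top_le hann hap
    exact hmin p hp q (hsub hq) hqp ▸ hq

theorem le_or_le_of_mem_associatedPrimes_of_linkedBy {R M : Type*} [CommRing R]
    [IsNoetherianRing R] [AddCommGroup M] [Module R M] {a b I p : Ideal R}
    (h : Ideal.LinkedBy R M a b I)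
    (hp : p ∈ associatedPrimes R (M ⧸ (I • ⊤ : Submodule R M))) : a ≤ p ∨ b ≤ p := by
  obtain ⟨hprime, x, hx⟩ := mem_associatedPrimes_quotient_iff.1 hp
  refine or_iff_not_imp_right.2 fun hb ↦ ?_
  obtain ⟨r, hr, hrp⟩ := SetLike.not_le_iff_exists.1 hb
  have hrx : r • x ∈ (I • ⊤ : Submodule R M).colonBy a :=
    h.2.2.2.2.1 ▸ Submodule.smul_mem_smul hr trivial
  intro s hs
  refine (hprime.mem_or_mem (x := s) (y := r) ?_).resolve_right hrp
  rw [hx, mul_smul]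
  exact Submodule.mem_colonBy.1 hrx s hs

/-- If `a` and `b` are linked by `I` over `M` and every associated prime of `M/IM`
is minimal, then `Ass(M/IM) = Ass(M/aM) ∪ Ass(M/bM)` and
`Ass(M/aM) = Ass(M/IM) ∩ V(a)`. -/
theorem ass_eq_of_linked {R M : Type*} [CommRing R] [IsNoetherianRing R]
    [AddCommGroup M] [Module R M] [Module.Finite R M]
    (a b I : Ideal R) (h : Ideal.LinkedBy R M a b I)
    (hmin : ∀ p ∈ associatedPrimes R (M ⧸ (I • ⊤ : Submodule R M)),
      ∀ q ∈ associatedPrimes R (M ⧸ (I • ⊤ : Submodule R M)), q ≤ p → q = p) :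
    associatedPrimes R (M ⧸ (I • ⊤ : Submodule R M)) =
        associatedPrimes R (M ⧸ (a • ⊤ : Submodule R M)) ∪
          associatedPrimes R (M ⧸ (b • ⊤ : Submodule R M)) ∧
      associatedPrimes R (M ⧸ (a • ⊤ : Submodule R M)) =
        associatedPrimes R (M ⧸ (I • ⊤ : Submodule R M)) ∩ {p : Ideal R | a ≤ p} := by
  have hb := associatedPrimes_eq_inter_of_linkedBy h.symm hmin
  have ha := associatedPrimes_eq_inter_of_linkedBy h hmin
  refine ⟨?_, ha⟩
  rw [ha, hb, ← Set.inter_union_distrib_left, eq_comm, Set.inter_eq_left]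
  exact fun p hp ↦ le_or_le_of_mem_associatedPrimes_of_linkedBy h hp
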